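/- Let Y be a measurable space and let ψ: [0,∞) → [0,∞) be convex and lower semicontinuous, with recession slope ψ^∞ := lim_{t→∞} ψ(t)/t ∈ [0,+∞]. For finite nonnegative measures μ, ν on Y, writing μ = (dμ/dν)·ν + μ^⊥ for the Lebesgue decomposition of μ with respect to ν, define F_ψ(μ|ν) := ∫_Y ψ(dμ/dν) dν + ψ^∞ · μ^⊥(Y) ∈ [0,+∞] (with the convention (+∞)·0 = 0). If (μₙ), (νₙ) are sequences of finite nonnegative measures converging setwise to μ and ν respectively (i.e. μₙ(B) → μ(B) and νₙ(B) → ν(B) for every measurable B ⊆ Y), then F_ψ(μ|ν) ≤ liminf_{n→∞} F_ψ(μₙ|νₙ). -/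

import Mathlib

open MeasureTheory Filter
open scoped ENNReal

/-- The entropy-type functional `F_ψ(μ|ν) = ∫ ψ(dμ/dν) dν + ψ^∞·μ^⊥(Y)`, where
`dμ/dν` is the Radon–Nikodym density of the absolutely continuous part of `μ`
with respect to `ν`, `μ^⊥` is the singular part, and `ψinf ∈ [0,+∞]` is the
recession slope of `ψ` (with the convention `(+∞)·0 = 0`). -/
noncomputable def entFun {Y : Type*} [MeasurableSpace Y] (ψ : ℝ → ℝ)
    (ψinf : ℝ≥0∞) (μ ν : Measure Y) : ℝ≥0∞ :=
  (∫⁻ y, ENNReal.ofReal (ψ ((μ.rnDeriv ν y).toReal)) ∂ν)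
    + ψinf * (μ.singularPart ν) Set.univ

/-!
The functional `F_ψ(μ|ν)` is the total mass of the measure `ψ(dμ/dν)·ν + ψ^∞·μ^⊥`. Since `ψ` is the
supremum of countably many affine functions `t ↦ a t + b`, this measure is the least superadditive
set function `L` such that `(a μ(B) + b ν(B))⁺ ≤ L(B)` for every affine minorant of `ψ` and every
measurable `B`. Under setwise convergence the left-hand sides of these inequalities converge, and a
liminf of superadditive set functions is superadditive. Hence the liminf of the measures attached
to `(μₙ, νₙ)` is again such an `L` for the limit pair `(μ, ν)`, and so it dominates the measure
attached to that pair.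
-/

/-- Superadditivity of a set function over disjoint pairs of measurable sets. It is the property
which finitely additive set functions retain after passing to a liminf. -/
def IsSuperadditive {Y : Type*} [MeasurableSpace Y] (L : Set Y → ℝ≥0∞) : Prop :=
  ∀ ⦃A B : Set Y⦄, MeasurableSet A → MeasurableSet B → Disjoint A B → L A + L B ≤ L (A ∪ B)

/-- The affine function `t ↦ a * t + b` is a minorant of `ψ` on `[0, ∞)`; values of `ψ` at negative
arguments are irrelevant. -/
def IsAffineMinorant (ψ : ℝ → ℝ) (a b : ℝ) : Prop :=
  ∀ t : ℝ, 0 ≤ t → a * t + b ≤ ψ t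

/-- The measure `ψ(dμ/dν)·ν + ψ^∞·μ^⊥`, of which `entFun ψ ψinf μ ν` is the total mass. -/
noncomputable def entMeasure {Y : Type*} [MeasurableSpace Y] (ψ : ℝ → ℝ) (ψinf : ℝ≥0∞)
    (μ ν : Measure Y) : Measure Y :=
  ν.withDensity (fun y => ENNReal.ofReal (ψ (μ.rnDeriv ν y).toReal)) + ψinf • μ.singularPart ν

lemma liminf_add_liminf_le_liminf_add {ι : Type*} {l : Filter ι} (u v : ι → ℝ≥0∞) :
    liminf u l + liminf v l ≤ liminf (fun i => u i + v i) l := by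
  simp only [liminf_eq_iSup_iInf]
  refine ENNReal.biSup_add_biSup_le' ⟨_, univ_mem⟩ ⟨_, univ_mem⟩ fun s hs t ht => ?_
  exact le_iSup₂_of_le (s ∩ t) (inter_mem hs ht) <|
    le_iInf₂ fun i hi => add_le_add (iInf₂_le i hi.1) (iInf₂_le i hi.2)

lemma ofReal_integral_le_lintegral_ofReal {Y : Type*} [MeasurableSpace Y] {ν : Measure Y}
    {g : Y → ℝ} (hg : Integrable g ν) :
    ENNReal.ofReal (∫ y, g y ∂ν) ≤ ∫⁻ y, ENNReal.ofReal (g y) ∂ν := by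
  rw [integral_eq_lintegral_pos_part_sub_lintegral_neg_part hg]
  exact (ENNReal.ofReal_le_ofReal (sub_le_self _ ENNReal.toReal_nonneg)).trans
    ENNReal.ofReal_toReal_le

namespace IsSuperadditive

variable {Y : Type*} [MeasurableSpace Y] {L : Set Y → ℝ≥0∞} {A B : Set Y}

lemma inter_add_sdiff_le (hL : IsSuperadditive L) (hA : MeasurableSet A) (hB : MeasurableSet B) :
    L (A ∩ B) + L (A \ B) ≤ L A := by
  simpa only [Set.inter_union_sdiff] using
    hL (hA.inter hB) (hA.diff hB) Set.disjoint_sdiff_inter.symm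

lemma mono (hL : IsSuperadditive L) (hA : MeasurableSet A) (hB : MeasurableSet B) (hAB : A ⊆ B) :
    L A ≤ L B := by
  calc L A = L (B ∩ A) := by rw [Set.inter_eq_self_of_subset_right hAB]
    _ ≤ L (B ∩ A) + L (B \ A) := le_self_add
    _ ≤ L B := hL.inter_add_sdiff_le hB hA

lemma of_measure (κ : Measure Y) : IsSuperadditive κ :=
  fun _ _ _ hB hAB => (measure_union hAB hB).ge

lemma liminf {ι : Type*} {l : Filter ι} {m : ι → Set Y → ℝ≥0∞} (hm : ∀ i, IsSuperadditive (m i)) :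
    IsSuperadditive fun B => Filter.liminf (fun i => m i B) l :=
  fun _ _ hA hB hAB => (liminf_add_liminf_le_liminf_add _ _).trans <|
    liminf_le_liminf <| .of_forall fun i => hm i hA hB hAB

lemma setLIntegral_max_le (hL : IsSuperadditive L) {ν : Measure Y} {f g : Y → ℝ≥0∞}
    (hf : Measurable f) (hg : Measurable g)
    (hfL : ∀ B, MeasurableSet B → ∫⁻ y in B, f y ∂ν ≤ L B)
    (hgL : ∀ B, MeasurableSet B → ∫⁻ y in B, g y ∂ν ≤ L B) (hB : MeasurableSet B) :
    ∫⁻ y in B, max (f y) (g y) ∂ν ≤ L B := by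
  have hfg : MeasurableSet {y | f y ≤ g y} := measurableSet_le hf hg
  have hcompl : B ∩ {y | g y < f y} = B \ {y | f y ≤ g y} := by
    ext y
    simp
  calc ∫⁻ y in B, max (f y) (g y) ∂ν
      = ∫⁻ y in B ∩ {y | f y ≤ g y}, g y ∂ν + ∫⁻ y in B \ {y | f y ≤ g y}, f y ∂ν := by
        rw [setLIntegral_max hf hg, hcompl]
    _ ≤ L (B ∩ {y | f y ≤ g y}) + L (B \ {y | f y ≤ g y}) :=
        add_le_add (hgL _ (hB.inter hfg)) (hfL _ (hB.diff hfg))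
    _ ≤ L B := hL.inter_add_sdiff_le hB hfg

lemma setLIntegral_iSup_le (hL : IsSuperadditive L) {ν : Measure Y} {g : ℕ → Y → ℝ≥0∞}
    (hg : ∀ i, Measurable (g i))
    (hgL : ∀ i B, MeasurableSet B → ∫⁻ y in B, g i y ∂ν ≤ L B) (hB : MeasurableSet B) :
    ∫⁻ y in B, ⨆ i, g i y ∂ν ≤ L B := by
  have hpartial : ∀ n, Measurable (partialSups g n) ∧
      ∀ B, MeasurableSet B → ∫⁻ y in B, partialSups g n y ∂ν ≤ L B := by
    intro n
    induction n with
    | zero => simpa only [partialSups_zero] using ⟨hg 0, hgL 0⟩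
    | succ n ih =>
      rw [partialSups_add_one]
      exact ⟨ih.1.sup (hg _), fun B => hL.setLIntegral_max_le ih.1 (hg _) ih.2 (hgL _)⟩
  have hiSup : ∀ y, ⨆ i, g i y = ⨆ n, partialSups g n y := fun y => by
    rw [← iSup_apply, ← iSup_partialSups_eq, iSup_apply]
  simp_rw [hiSup]
  rw [lintegral_iSup (fun n => (hpartial n).1) (partialSups g).monotone]
  exact iSup_le fun n => (hpartial n).2 B hB

lemma setLIntegral_ofReal_le (hL : IsSuperadditive L) {ν : Measure Y} {h : Y → ℝ}
    (hmeas : Measurable h) (hint : Integrable h ν)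
    (hhL : ∀ B, MeasurableSet B → ENNReal.ofReal (∫ y in B, h y ∂ν) ≤ L B)
    (hB : MeasurableSet B) :
    ∫⁻ y in B, ENNReal.ofReal (h y) ∂ν ≤ L B := by
  have hpos : MeasurableSet {y | 0 ≤ h y} := measurableSet_le measurable_const hmeas
  have hneg : ∫⁻ y in B \ {y | 0 ≤ h y}, ENNReal.ofReal (h y) ∂ν = 0 :=
    setLIntegral_eq_zero (hB.diff hpos) fun y hy =>
      ENNReal.ofReal_of_nonpos (not_le.1 hy.2).le
  calc ∫⁻ y in B, ENNReal.ofReal (h y) ∂ν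
      = ∫⁻ y in B ∩ {y | 0 ≤ h y}, ENNReal.ofReal (h y) ∂ν := by
        rw [← lintegral_inter_add_sdiff _ B hpos, hneg, add_zero]
    _ = ENNReal.ofReal (∫ y in B ∩ {y | 0 ≤ h y}, h y ∂ν) :=
        (ofReal_integral_eq_lintegral_ofReal hint.restrict <|
          ae_restrict_of_forall_mem (hB.inter hpos) fun _ hy => hy.2).symm
    _ ≤ L (B ∩ {y | 0 ≤ h y}) := hhL _ (hB.inter hpos)
    _ ≤ L B := hL.mono (hB.inter hpos) hB Set.inter_subset_left

lemma add_measure_le_of_mutuallySingular (hL : IsSuperadditive L) {κ₁ κ₂ : Measure Y}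
    (hκ : κ₁ ⟂ₘ κ₂) (h₁ : ∀ B, MeasurableSet B → κ₁ B ≤ L B)
    (h₂ : ∀ B, MeasurableSet B → κ₂ B ≤ L B) (hB : MeasurableSet B) :
    (κ₁ + κ₂) B ≤ L B := by
  have hS := hκ.measurableSet_nullSet
  have hκ₁ : κ₁ B = κ₁ (B \ hκ.nullSet) := (measure_sdiff_null hκ.measure_nullSet).symm
  have hκ₂ : κ₂ B = κ₂ (B ∩ hκ.nullSet) :=
    measure_congr (inter_ae_eq_left_of_ae_eq_univ <| ae_eq_univ.2 hκ.measure_compl_nullSet).symm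
  calc (κ₁ + κ₂) B = κ₂ (B ∩ hκ.nullSet) + κ₁ (B \ hκ.nullSet) := by
        rw [Measure.add_apply, hκ₁, hκ₂, add_comm]
    _ ≤ L (B ∩ hκ.nullSet) + L (B \ hκ.nullSet) :=
        add_le_add (h₂ _ (hB.inter hS)) (h₁ _ (hB.diff hS))
    _ ≤ L B := hL.inter_add_sdiff_le hB hS

end IsSuperadditive

section AffineMinorants

variable {ψ : ℝ → ℝ} {ψinf : ℝ≥0∞}

lemma exists_seq_isAffineMinorant_iSup_eq (hconv : ConvexOn ℝ (Set.Ici 0) ψ)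
    (hlsc : LowerSemicontinuousOn ψ (Set.Ici 0)) :
    ∃ a b : ℕ → ℝ, (∀ i, IsAffineMinorant ψ (a i) (b i)) ∧
      ∀ t, 0 ≤ t → ENNReal.ofReal (ψ t) = ⨆ i, ENNReal.ofReal (a i * t + b i) := by
  obtain ⟨l, b, hle, hsup⟩ := hconv.real_sSup_of_nat_affine_eq isClosed_Ici hlsc
  have hl : ∀ i t, l i 1 * t = l i t := fun i t => by
    rw [mul_comm, ← smul_eq_mul, ← map_smul, smul_eq_mul, mul_one]
  have hminor : ∀ i, IsAffineMinorant ψ (l i 1) (b i) := fun i t ht => by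
    simpa [hl] using hle i ⟨t, ht⟩
  refine ⟨fun i => l i 1, b, hminor, fun t ht => ?_⟩
  have hψt : ψ t = ⨆ i, (l i 1 * t + b i) := by
    simpa [hl] using (congrFun hsup ⟨t, ht⟩).symm
  have hbdd : BddAbove (Set.range fun i => l i 1 * t + b i) :=
    ⟨ψ t, Set.forall_mem_range.2 fun i => hminor i t ht⟩
  rw [hψt]
  exact ENNReal.ofReal_mono.map_ciSup_of_continuousAt ENNReal.continuous_ofReal.continuousAt hbdd

lemma IsAffineMinorant.ofReal_slope_le {a b : ℝ} (hab : IsAffineMinorant ψ a b)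
    (hψinf : Tendsto (fun t : ℝ => ENNReal.ofReal (ψ t / t)) atTop (nhds ψinf)) :
    ENNReal.ofReal a ≤ ψinf := by
  have hslope : Tendsto (fun t : ℝ => ENNReal.ofReal (a + b / t)) atTop
      (nhds (ENNReal.ofReal a)) := by
    refine ENNReal.tendsto_ofReal ?_
    simpa using (tendsto_const_nhds (x := a)).add (tendsto_const_nhds.div_atTop tendsto_id)
  refine le_of_tendsto_of_tendsto hslope hψinf ?_
  filter_upwards [eventually_gt_atTop 0] with t ht
  refine ENNReal.ofReal_le_ofReal ?_
  calc a + b / t = (a * t + b) / t := by field_simp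
    _ ≤ ψ t / t := by gcongr; exact hab t ht.le

lemma exists_isAffineMinorant_of_lt_recession (hnonneg : ∀ t, 0 ≤ t → 0 ≤ ψ t)
    (hψinf : Tendsto (fun t : ℝ => ENNReal.ofReal (ψ t / t)) atTop (nhds ψinf))
    {c : ℝ≥0∞} (hc : c < ψinf) :
    ∃ b, IsAffineMinorant ψ c.toReal b := by
  obtain ⟨T, hT⟩ := eventually_atTop.1 <|
    (hψinf.eventually_const_lt hc).and (eventually_gt_atTop 0)
  have hT0 : 0 < T := (hT T le_rfl).2
  refine ⟨-(c.toReal * T), fun t ht => ?_⟩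
  rcases le_total t T with htT | hTt
  · calc c.toReal * t + -(c.toReal * T) ≤ 0 := by
          linarith [mul_le_mul_of_nonneg_left htT c.toReal_nonneg]
      _ ≤ ψ t := hnonneg t ht
  · obtain ⟨hct, ht0⟩ := hT t hTt
    calc c.toReal * t + -(c.toReal * T) ≤ c.toReal * t := by
          linarith [mul_nonneg c.toReal_nonneg hT0.le]
      _ ≤ ψ t := ((lt_div_iff₀ ht0).1 <| (ENNReal.lt_ofReal_iff_toReal_lt hc.ne_top).1 hct).le

end AffineMinorants

section EntMeasure

variable {Y : Type*} [MeasurableSpace Y] {ψ : ℝ → ℝ} {ψinf : ℝ≥0∞} {μ ν : Measure Y} {B : Set Y}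

lemma entMeasure_apply (hB : MeasurableSet B) :
    entMeasure ψ ψinf μ ν B =
      ∫⁻ y in B, ENNReal.ofReal (ψ (μ.rnDeriv ν y).toReal) ∂ν + ψinf * μ.singularPart ν B := by
  simp only [entMeasure, Measure.add_apply, withDensity_apply _ hB, Measure.smul_apply,
    smul_eq_mul]

lemma entMeasure_univ : entMeasure ψ ψinf μ ν Set.univ = entFun ψ ψinf μ ν := by
  rw [entMeasure_apply .univ, Measure.restrict_univ, entFun]

variable [IsFiniteMeasure μ]

-- On a `ν`-null set carrying `μ^⊥` only the slope of the affine expression contributes.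
lemma IsSuperadditive.ofReal_mul_singularPart_le {L : Set Y → ℝ≥0∞}
    (hL : IsSuperadditive L) {a b : ℝ}
    (hab : ∀ B, MeasurableSet B → ENNReal.ofReal (a * μ.real B + b * ν.real B) ≤ L B)
    (hB : MeasurableSet B) :
    ENNReal.ofReal a * μ.singularPart ν B ≤ L B := by
  have hsing := Measure.mutuallySingular_singularPart μ ν
  set S := hsing.nullSet
  have hBS : MeasurableSet (B \ S) := hB.diff hsing.measurableSet_nullSet
  have hnull : ν (B \ S) = 0 :=
    measure_mono_null (Set.sdiff_subset_compl B S) hsing.measure_compl_nullSet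
  calc ENNReal.ofReal a * μ.singularPart ν B
      = ENNReal.ofReal a * μ.singularPart ν (B \ S) := by
        rw [measure_sdiff_null hsing.measure_nullSet]
    _ ≤ ENNReal.ofReal a * μ (B \ S) := by gcongr; exact Measure.singularPart_le μ ν
    _ = ENNReal.ofReal (a * μ.real (B \ S) + b * ν.real (B \ S)) := by
        rw [measureReal_def ν, hnull, ENNReal.toReal_zero, mul_zero, add_zero,
          ENNReal.ofReal_mul' measureReal_nonneg, ofReal_measureReal]
    _ ≤ L (B \ S) := hab _ hBS
    _ ≤ L B := hL.mono hBS hB Set.sdiff_subset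

variable [IsFiniteMeasure ν]

lemma integrable_affine_rnDeriv (a b : ℝ) :
    Integrable (fun y => a * (μ.rnDeriv ν y).toReal + b) ν :=
  (Measure.integrable_toReal_rnDeriv.const_mul a).add (integrable_const b)

lemma setIntegral_affine_rnDeriv_add_singularPart (a b : ℝ) (hB : MeasurableSet B) :
    ∫ y in B, (a * (μ.rnDeriv ν y).toReal + b) ∂ν + a * (μ.singularPart ν).real B =
      a * μ.real B + b * ν.real B := by
  have hμB : ∫ y in B, (μ.rnDeriv ν y).toReal ∂ν + (μ.singularPart ν).real B = μ.real B := by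
    rw [Measure.setIntegral_toReal_rnDeriv_eq_withDensity' hB, ← measureReal_add_apply,
      Measure.rnDeriv_add_singularPart]
  rw [integral_add (Measure.integrable_toReal_rnDeriv.restrict.const_mul a) (integrable_const b),
    integral_const_mul, setIntegral_const, smul_eq_mul, ← hμB]
  ring

lemma IsAffineMinorant.ofReal_le_entMeasure {a b : ℝ} (hab : IsAffineMinorant ψ a b)
    (ha : ENNReal.ofReal a ≤ ψinf) (hB : MeasurableSet B) :
    ENNReal.ofReal (a * μ.real B + b * ν.real B) ≤ entMeasure ψ ψinf μ ν B := by
  rw [← setIntegral_affine_rnDeriv_add_singularPart a b hB, entMeasure_apply hB]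
  refine ENNReal.ofReal_add_le.trans (add_le_add ?_ ?_)
  · calc ENNReal.ofReal (∫ y in B, (a * (μ.rnDeriv ν y).toReal + b) ∂ν)
        ≤ ∫⁻ y in B, ENNReal.ofReal (a * (μ.rnDeriv ν y).toReal + b) ∂ν :=
          ofReal_integral_le_lintegral_ofReal (integrable_affine_rnDeriv a b).restrict
      _ ≤ ∫⁻ y in B, ENNReal.ofReal (ψ (μ.rnDeriv ν y).toReal) ∂ν :=
          lintegral_mono fun y => ENNReal.ofReal_le_ofReal (hab _ ENNReal.toReal_nonneg)
  · rw [ENNReal.ofReal_mul' measureReal_nonneg, ofReal_measureReal]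
    gcongr

namespace IsSuperadditive

variable {L : Set Y → ℝ≥0∞}

-- Off a `ν`-null set carrying `μ^⊥`, the affine expression is the integral of its density.
lemma setLIntegral_affine_rnDeriv_le (hL : IsSuperadditive L) {a b : ℝ}
    (hab : ∀ B, MeasurableSet B → ENNReal.ofReal (a * μ.real B + b * ν.real B) ≤ L B)
    (hB : MeasurableSet B) :
    ∫⁻ y in B, ENNReal.ofReal (a * (μ.rnDeriv ν y).toReal + b) ∂ν ≤ L B := by
  refine hL.setLIntegral_ofReal_le (by fun_prop) (integrable_affine_rnDeriv a b)
    (fun A hA => ?_) hB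
  have hsing := Measure.mutuallySingular_singularPart μ ν
  set S := hsing.nullSet
  have hAS : MeasurableSet (A ∩ S) := hA.inter hsing.measurableSet_nullSet
  have hnull : (μ.singularPart ν).real (A ∩ S) = 0 := by
    rw [measureReal_def, measure_inter_null_of_null_right A hsing.measure_nullSet,
      ENNReal.toReal_zero]
  have hae : (A ∩ S : Set Y) =ᵐ[ν] A :=
    inter_ae_eq_left_of_ae_eq_univ (ae_eq_univ.2 hsing.measure_compl_nullSet)
  calc ENNReal.ofReal (∫ y in A, (a * (μ.rnDeriv ν y).toReal + b) ∂ν)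
      = ENNReal.ofReal (a * μ.real (A ∩ S) + b * ν.real (A ∩ S)) := by
        rw [← setIntegral_affine_rnDeriv_add_singularPart a b hAS, hnull, mul_zero, add_zero,
          setIntegral_congr_set hae]
    _ ≤ L (A ∩ S) := hab _ hAS
    _ ≤ L A := hL.mono hAS hA Set.inter_subset_left

lemma entMeasure_le (hL : IsSuperadditive L) (hconv : ConvexOn ℝ (Set.Ici 0) ψ)
    (hlsc : LowerSemicontinuousOn ψ (Set.Ici 0)) (hnonneg : ∀ t, 0 ≤ t → 0 ≤ ψ t)
    (hψinf : Tendsto (fun t : ℝ => ENNReal.ofReal (ψ t / t)) atTop (nhds ψinf))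
    (hminor : ∀ a b, IsAffineMinorant ψ a b → ∀ B, MeasurableSet B →
      ENNReal.ofReal (a * μ.real B + b * ν.real B) ≤ L B)
    (hB : MeasurableSet B) :
    entMeasure ψ ψinf μ ν B ≤ L B := by
  refine hL.add_measure_le_of_mutuallySingular ?_ (fun B hB => ?_) (fun B hB => ?_) hB
  · exact (((Measure.mutuallySingular_singularPart μ ν).smul ψinf).mono_ac .rfl
      (withDensity_absolutelyContinuous ν _)).symm
  · obtain ⟨a, b, hab, hsup⟩ := exists_seq_isAffineMinorant_iSup_eq hconv hlsc
    simp only [withDensity_apply _ hB, hsup _ ENNReal.toReal_nonneg]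
    exact hL.setLIntegral_iSup_le (fun i => by fun_prop)
      (fun i _ => hL.setLIntegral_affine_rnDeriv_le (hminor _ _ (hab i))) hB
  · refine ENNReal.mul_le_of_forall_lt fun c hc m hm => ?_
    obtain ⟨b, hb⟩ := exists_isAffineMinorant_of_lt_recession hnonneg hψinf hc
    calc c * m ≤ ENNReal.ofReal c.toReal * μ.singularPart ν B := by
          rw [ENNReal.ofReal_toReal hc.ne_top]
          gcongr
          exact hm.le
      _ ≤ L B := hL.ofReal_mul_singularPart_le (hminor _ _ hb) hB

end IsSuperadditive

end EntMeasure

lemma tendsto_ofReal_affine_measureReal {Y ι : Type*} [MeasurableSpace Y] {l : Filter ι}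
    {μ ν : ι → Measure Y} {μlim νlim : Measure Y} {B : Set Y} (a b : ℝ)
    (hμB : μlim B ≠ ∞) (hνB : νlim B ≠ ∞)
    (hμ : Tendsto (fun i => μ i B) l (nhds (μlim B)))
    (hν : Tendsto (fun i => ν i B) l (nhds (νlim B))) :
    Tendsto (fun i => ENNReal.ofReal (a * (μ i).real B + b * (ν i).real B)) l
      (nhds (ENNReal.ofReal (a * μlim.real B + b * νlim.real B))) :=
  ENNReal.tendsto_ofReal <| (((ENNReal.tendsto_toReal hμB).comp hμ).const_mul a).add
    (((ENNReal.tendsto_toReal hνB).comp hν).const_mul b)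

theorem entFun_lsc_setwise_general {Y ι : Type*} [MeasurableSpace Y] {l : Filter ι} {ψ : ℝ → ℝ}
    (hconv : ConvexOn ℝ (Set.Ici 0) ψ) (hlsc : LowerSemicontinuousOn ψ (Set.Ici 0))
    (hnonneg : ∀ t, 0 ≤ t → 0 ≤ ψ t) {ψinf : ℝ≥0∞}
    (hψinf : Tendsto (fun t : ℝ => ENNReal.ofReal (ψ t / t)) atTop (nhds ψinf))
    {μ ν : ι → Measure Y} {μlim νlim : Measure Y}
    [∀ i, IsFiniteMeasure (μ i)] [∀ i, IsFiniteMeasure (ν i)]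
    [IsFiniteMeasure μlim] [IsFiniteMeasure νlim]
    (hμ : ∀ B, MeasurableSet B → Tendsto (fun i => μ i B) l (nhds (μlim B)))
    (hν : ∀ B, MeasurableSet B → Tendsto (fun i => ν i B) l (nhds (νlim B))) :
    entFun ψ ψinf μlim νlim ≤ liminf (fun i => entFun ψ ψinf (μ i) (ν i)) l := by
  simp only [← entMeasure_univ]
  refine (IsSuperadditive.liminf fun i => .of_measure (entMeasure ψ ψinf (μ i) (ν i))).entMeasure_le
    hconv hlsc hnonneg hψinf (fun a b hab B hB => ?_) .univ
  have hle : ∀ i, ENNReal.ofReal (a * (μ i).real B + b * (ν i).real B) ≤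
      entMeasure ψ ψinf (μ i) (ν i) B :=
    fun i => hab.ofReal_le_entMeasure (hab.ofReal_slope_le hψinf) hB
  have hlim := tendsto_ofReal_affine_measureReal a b (measure_ne_top μlim B)
    (measure_ne_top νlim B) (hμ B hB) (hν B hB)
  exact (le_liminf_iff).2 fun y hy =>
    (hlim.eventually_const_lt hy).mono fun i hi => hi.trans_le (hle i)

/-- Joint lower semicontinuity of `F_ψ(·|·)` with respect to setwise convergence
of both arguments, for convex lower semicontinuous nonnegative `ψ` on `[0,∞)`. -/
theorem entFun_lsc_setwise
    {Y : Type*} [MeasurableSpace Y]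
    (ψ : ℝ → ℝ)
    (hψconv : ConvexOn ℝ (Set.Ici 0) ψ)
    (hψlsc : LowerSemicontinuousOn ψ (Set.Ici 0))
    (hψnonneg : ∀ r : ℝ, 0 ≤ r → 0 ≤ ψ r)
    (ψinf : ℝ≥0∞)
    (hψinf : Tendsto (fun t : ℝ => ENNReal.ofReal (ψ t / t)) atTop (nhds ψinf))
    (μ ν : ℕ → Measure Y) (μlim νlim : Measure Y)
    [∀ n, IsFiniteMeasure (μ n)] [∀ n, IsFiniteMeasure (ν n)]
    [IsFiniteMeasure μlim] [IsFiniteMeasure νlim]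
    (hμ : ∀ B : Set Y, MeasurableSet B →
      Tendsto (fun n => μ n B) atTop (nhds (μlim B)))
    (hν : ∀ B : Set Y, MeasurableSet B →
      Tendsto (fun n => ν n B) atTop (nhds (νlim B))) :
    entFun ψ ψinf μlim νlim
      ≤ liminf (fun n => entFun ψ ψinf (μ n) (ν n)) atTop := by
  exact entFun_lsc_setwise_general hψconv hψlsc hψnonneg hψinf hμ hν
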